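/- arXiv:2507.15145 — 4 statements merged into one kernel-verified Lean document; each statement's English description precedes it below -/
import Mathlib

section
/- Let C : Fin L → ℝ be the confidence-score sequence of an event and let αl ≤ αl', αu ≤ αu' be real thresholds with αl' < αu'. If the event is predicted normal under (αl, αu), then it is predicted normal under (αl', αu'). In other words, the predicate 'predicted normal' is monotone (isotone) with respect to the componentwise order on the threshold pair: raising either threshold can only increase the chance of a normal classification. -/
/-- An event with confidence scores `C` is predicted critical under thresholds `(αl, αu)`
if some layer `q` has `C q ≥ αu` while all earlier layers have scores strictly between
the thresholds. -/
def PredCritical {L : ℕ} (C : Fin L → ℝ) (αl αu : ℝ) : Prop :=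
  ∃ q : Fin L, αu ≤ C q ∧ ∀ t : Fin L, t < q → αl < C t ∧ C t < αu

/-- An event is predicted normal if some layer `q` has `C q ≤ αl` with all earlier layers
strictly between the thresholds, or if every layer score lies strictly between the
thresholds. -/
def PredNormal {L : ℕ} (C : Fin L → ℝ) (αl αu : ℝ) : Prop :=
  (∃ q : Fin L, C q ≤ αl ∧ ∀ t : Fin L, t < q → αl < C t ∧ C t < αu) ∨
  (∀ t : Fin L, αl < C t ∧ C t < αu)

section

variable {ι α : Type*} [Preorder ι] [LinearOrder α] {C : ι → α} {l l' u u' : α}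

/-- The prediction rule of `PredNormal`, for layers indexed by an arbitrary preorder and scores
in an arbitrary linear order; `PredNormal` is the case of layers `Fin L` and real scores. -/
def PredictedNormal (C : ι → α) (l u : α) : Prop :=
  (∃ q, C q ≤ l ∧ ∀ t, t < q → l < C t ∧ C t < u) ∨ ∀ t, l < C t ∧ C t < u

variable [WellFoundedLT ι]

-- Passing to a minimal layer below `q` with score at most `l` supplies the missing lower bounds.
theorem PredictedNormal.of_le_of_forall_lt {q : ι} (hq : C q ≤ l) (hlt : ∀ t, t < q → C t < u) :
    PredictedNormal C l u := by
  obtain ⟨m, hmq, hm⟩ := exists_minimal_le_of_wellFoundedLT (C · ≤ l) q hq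
  exact .inl ⟨m, hm.prop, fun t ht ↦ ⟨not_le.mp (hm.not_prop_of_lt ht), hlt t (ht.trans_le hmq)⟩⟩

-- Without the lower bounds, each clause is visibly preserved when either threshold is raised.
theorem predictedNormal_iff_exists_le_or_forall_lt :
    PredictedNormal C l u ↔ (∃ q, C q ≤ l ∧ ∀ t, t < q → C t < u) ∨ ∀ t, C t < u := by
  constructor
  · rintro (⟨q, hq, hbetween⟩ | hbetween)
    · exact .inl ⟨q, hq, fun t ht ↦ (hbetween t ht).2⟩
    · exact .inr fun t ↦ (hbetween t).2
  · rintro (⟨q, hq, hlt⟩ | hlt)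
    · exact .of_le_of_forall_lt hq hlt
    · by_cases hexit : ∃ q, C q ≤ l
      · obtain ⟨q, hq⟩ := hexit
        exact .of_le_of_forall_lt hq fun t _ ↦ hlt t
      · exact .inr fun t ↦ ⟨not_le.mp (not_exists.mp hexit t), hlt t⟩

theorem predNormal_monotone_general (hl : l ≤ l') (hu : u ≤ u') (hnorm : PredictedNormal C l u) :
    PredictedNormal C l' u' := by
  rw [predictedNormal_iff_exists_le_or_forall_lt] at hnorm ⊢
  rcases hnorm with ⟨q, hq, hlt⟩ | hlt
  · exact .inl ⟨q, hq.trans hl, fun t ht ↦ (hlt t ht).trans_le hu⟩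
  · exact .inr fun t ↦ (hlt t).trans_le hu

end

theorem predNormal_monotone {L : ℕ} (C : Fin L → ℝ) (αl αl' αu αu' : ℝ)
    (hl : αl ≤ αl') (hu : αu ≤ αu') (h' : αl' < αu')
    (hnorm : PredNormal C αl αu) : PredNormal C αl' αu' :=
  predNormal_monotone_general hl hu hnorm
end

section
/- Let P be a finite index set of events, each event k ∈ P having a confidence-score sequence C k : Fin L → ℝ. For real thresholds αl ≤ αl' and αu ≤ αu', the number of events of P that are predicted critical under (αl', αu') is at most the number of events of P that are predicted critical under (αl, αu). That is, the true-positive count |{k ∈ P : k is predicted critical under (αl, αu)}| is antitone with respect to the componentwise order on (αl, αu). -/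
open Classical

/-- Critical prediction for layers in an arbitrary preorder and scores in any ordered type;
`PredCritical` is, definitionally, the case of layers in `Fin L` and real scores. -/
def ExitsCritical {κ β : Type*} [Preorder κ] [Preorder β]
    (C : κ → β) (αl αu : β) : Prop :=
  ∃ q, αu ≤ C q ∧ ∀ t < q, αl < C t ∧ C t < αu

section

variable {κ β : Type*} [Preorder κ] [WellFoundedLT κ] [LinearOrder β]

-- Below a minimal layer whose score reaches `αu`, the bound `C t < αu` is automatic.
theorem exitsCritical_iff_exists_le_forall_lt {C : κ → β} {αl αu : β} :
    ExitsCritical C αl αu ↔ ∃ q, αu ≤ C q ∧ ∀ t < q, αl < C t := by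
  constructor
  · rintro ⟨q, hq, hbetween⟩
    exact ⟨q, hq, fun t ht => (hbetween t ht).1⟩
  · rintro ⟨q, hq, hlower⟩
    obtain ⟨m, hmq, hm⟩ := exists_minimal_le_of_wellFoundedLT (fun t => αu ≤ C t) q hq
    exact ⟨m, hm.prop, fun t ht =>
      ⟨hlower t (ht.trans_le hmq), not_le.mp (hm.not_prop_of_lt ht)⟩⟩

theorem ExitsCritical.anti {C : κ → β} {αl αl' αu αu' : β}
    (h : ExitsCritical C αl' αu') (hl : αl ≤ αl') (hu : αu ≤ αu') :
    ExitsCritical C αl αu := by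
  obtain ⟨q, hq, hlower⟩ := exitsCritical_iff_exists_le_forall_lt.mp h
  exact exitsCritical_iff_exists_le_forall_lt.mpr
    ⟨q, hu.trans hq, fun t ht => hl.trans_lt (hlower t ht)⟩

theorem truePositiveCount_antitone_general {ι : Type*} (P : Finset ι) (C : ι → κ → β) :
    Antitone fun α : β × β => (P.filter fun k => ExitsCritical (C k) α.1 α.2).card :=
  fun _ _ hα => Finset.card_le_card <|
    Finset.monotone_filter_right P fun _ _ h => h.anti hα.1 hα.2

end

theorem truePositiveCount_antitone {L : ℕ} {ι : Type*} (P : Finset ι)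
    (C : ι → Fin L → ℝ) (αl αl' αu αu' : ℝ) (hl : αl ≤ αl') (hu : αu ≤ αu') :
    (P.filter (fun k => PredCritical (C k) αl' αu')).card ≤
      (P.filter (fun k => PredCritical (C k) αl αu)).card :=
  truePositiveCount_antitone_general P C (Prod.mk_le_mk.mpr ⟨hl, hu⟩)
end

section
/- (Proportional fairness of the weighted log-utility maximizer.) Let S ⊆ (Fin N → ℝ) be a convex set, let ρ : Fin N → ℝ satisfy ρ n > 0 for all n, and let u ∈ S with u n > 0 for all n be such that ∑ₙ ρ n · ln(u n) ≥ ∑ₙ ρ n · ln(v n) for every v ∈ S with v n > 0 for all n. Then for every v ∈ S with v n > 0 for all n, the aggregated weighted proportional change is non-positive: ∑ₙ ρ n · (v n − u n) / (u n) ≤ 0. -/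
/-!
The positive orthant is open, so a maximizer `u` over the strictly positive part of `S` is a
local maximizer over `S` itself. The weighted log-utility has gradient `ρ i / u i` at `u`, and
its slope at `u` towards any `v ∈ S`, namely `∑ i, ρ i * (v i - u i) / u i`, cannot be positive
because the segment from `u` to `v` stays in `S`.
-/

open scoped Topology

theorem isLocalMaxOn_inter_iff_of_mem_nhds {X β : Type*} [TopologicalSpace X] [Preorder β]
    {f : X → β} {s t : Set X} {a : X} (ht : t ∈ 𝓝 a) :
    IsLocalMaxOn f (s ∩ t) a ↔ IsLocalMaxOn f s a := by
  rw [IsLocalMaxOn, IsLocalMaxOn, nhdsWithin_inter_of_mem' (mem_nhdsWithin_of_mem_nhds ht)]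

theorem hasFDerivWithinAt_sub_nonpos_of_isLocalMaxOn {E : Type*} [NormedAddCommGroup E]
    [NormedSpace ℝ E] {f : E → ℝ} {f' : StrongDual ℝ E} {s : Set E} {a b : E}
    (hs : StarConvex ℝ a s) (hmax : IsLocalMaxOn f s a) (hf : HasFDerivWithinAt f f' s a)
    (hb : b ∈ s) : f' (b - a) ≤ 0 :=
  hmax.hasFDerivWithinAt_nonpos hf
    (sub_mem_posTangentConeAt_of_segment_subset (hs.segment_subset hb))

theorem setOf_forall_pos_mem_nhds {ι : Type*} [Finite ι] {u : ι → ℝ} (hu : ∀ i, 0 < u i) :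
    {w : ι → ℝ | ∀ i, 0 < w i} ∈ 𝓝 u :=
  Filter.eventually_all.2 fun i => (continuous_apply i).continuousAt.eventually_const_lt (hu i)

section WeightedLogUtility

variable {ι : Type*} [Fintype ι]

/-- The weighted logarithmic objective `∑ i, ρ i * log (w i)`, whose maximizers over the strictly
positive feasible vectors are the candidates for proportional fairness. It is defined on all
vectors, with the conventions `Real.log x = Real.log |x|` and `Real.log 0 = 0`. -/
noncomputable def weightedLogUtility (ρ w : ι → ℝ) : ℝ :=
  ∑ i, ρ i * Real.log (w i)

theorem hasFDerivAt_weightedLogUtility (ρ : ι → ℝ) {u : ι → ℝ} (hu : ∀ i, u i ≠ 0) :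
    HasFDerivAt (weightedLogUtility ρ)
      (∑ i, ρ i • (u i)⁻¹ • ContinuousLinearMap.proj (R := ℝ) (φ := fun _ : ι => ℝ) i) u :=
  HasFDerivAt.fun_sum fun i _ => ((hasFDerivAt_apply i u).log (hu i)).const_mul (ρ i)

theorem weighted_log_maximizer_proportionally_fair_general {S : Set (ι → ℝ)} {u : ι → ℝ}
    (hS : StarConvex ℝ u S) (ρ : ι → ℝ) (hupos : ∀ i, 0 < u i)
    (hmax : IsLocalMaxOn (weightedLogUtility ρ) (S ∩ {w | ∀ i, 0 < w i}) u)
    {v : ι → ℝ} (hv : v ∈ S) : ∑ i, ρ i * (v i - u i) / u i ≤ 0 := by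
  have hmaxS : IsLocalMaxOn (weightedLogUtility ρ) S u :=
    (isLocalMaxOn_inter_iff_of_mem_nhds (setOf_forall_pos_mem_nhds hupos)).1 hmax
  have hderiv := hasFDerivAt_weightedLogUtility ρ fun i => (hupos i).ne'
  calc ∑ i, ρ i * (v i - u i) / u i
      = (∑ i, ρ i • (u i)⁻¹ • ContinuousLinearMap.proj (R := ℝ) (φ := fun _ : ι => ℝ) i)
          (v - u) := by
        simp [div_eq_mul_inv, mul_assoc, mul_comm]
    _ ≤ 0 := hasFDerivWithinAt_sub_nonpos_of_isLocalMaxOn hS hmaxS hderiv.hasFDerivWithinAt hv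

end WeightedLogUtility

/-- Proportional fairness of the weighted log-utility maximizer: any maximizer of the
weighted logarithmic objective over the strictly positive vectors of a convex feasible
set is proportionally fair. -/
theorem weighted_log_maximizer_proportionally_fair {N : ℕ}
    (S : Set (Fin N → ℝ)) (hS : Convex ℝ S)
    (ρ : Fin N → ℝ) (hρ : ∀ n, 0 < ρ n)
    (u : Fin N → ℝ) (hu : u ∈ S) (hupos : ∀ n, 0 < u n)
    (hmax : ∀ v ∈ S, (∀ n, 0 < v n) →
      ∑ n, ρ n * Real.log (v n) ≤ ∑ n, ρ n * Real.log (u n)) :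
    ∀ v ∈ S, (∀ n, 0 < v n) → ∑ n, ρ n * (v n - u n) / u n ≤ 0 :=
  fun _ hv _ => weighted_log_maximizer_proportionally_fair_general (hS.starConvex hu) ρ hupos
    (IsMaxOn.localize fun w hw => hmax w hw.1 hw.2) hv
end

section
/- Let Q be a finite index set of ground-truth normal events, each event k ∈ Q having a confidence-score sequence C k : Fin L → ℝ. For real thresholds αl ≤ αl' and αu ≤ αu' with αl < αu and αl' < αu', the number of events of Q predicted normal under (αl, αu) is at most the number of events of Q predicted normal under (αl', αu'): the true-negative count |{k ∈ Q : k is predicted normal under (αl, αu)}| is monotone (isotone) with respect to the componentwise order on (αl, αu). -/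
open Classical

section FirstExit

variable {α : Type*} [LinearOrder α] [WellFoundedLT α] {P R : α → Prop}

theorem exists_first_or_forall_not_iff_forall_exists_le :
    ((∃ q, P q ∧ ∀ t < q, ¬P t ∧ ¬R t) ∨ ∀ t, ¬P t ∧ ¬R t) ↔
      ∀ q, R q → ∃ t ≤ q, P t := by
  constructor
  · rintro (⟨p, hp, before⟩ | never) q hq
    · exact ⟨p, not_lt.mp fun hqp => (before q hqp).2 hq, hp⟩
    · exact absurd hq (never q).2
  · intro preceded
    by_cases hP : ∃ p, P p
    · obtain ⟨p, hp⟩ := exists_minimal_of_wellFoundedLT P hP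
      refine Or.inl ⟨p, hp.prop, fun t htp => ⟨hp.not_prop_of_lt htp, fun hRt => ?_⟩⟩
      obtain ⟨s, hst, hPs⟩ := preceded t hRt
      exact hp.not_prop_of_lt (hst.trans_lt htp) hPs
    · refine Or.inr fun t => ⟨fun hPt => hP ⟨t, hPt⟩, fun hRt => ?_⟩
      obtain ⟨s, -, hPs⟩ := preceded t hRt
      exact hP ⟨s, hPs⟩

end FirstExit

section PredNormal

variable {L : ℕ} {C : Fin L → ℝ} {αl αl' αu αu' : ℝ}

/- Raising `αu` shrinks the set of layers `q` to be tested and raising `αl` enlarges the set of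
admissible `t`, so in this form the prediction is visibly monotone in both thresholds. -/
theorem predNormal_iff_forall_exists_le :
    PredNormal C αl αu ↔ ∀ q, αu ≤ C q → ∃ t ≤ q, C t ≤ αl := by
  simpa only [PredNormal, not_le] using
    exists_first_or_forall_not_iff_forall_exists_le
      (P := fun t => C t ≤ αl) (R := fun t => αu ≤ C t)

theorem PredNormal.mono (hl : αl ≤ αl') (hu : αu ≤ αu') (hC : PredNormal C αl αu) :
    PredNormal C αl' αu' := by
  rw [predNormal_iff_forall_exists_le] at hC ⊢
  intro q hq
  obtain ⟨t, htq, ht⟩ := hC q (hu.trans hq)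
  exact ⟨t, htq, ht.trans hl⟩

end PredNormal

theorem trueNegativeCount_monotone {L : ℕ} {ι : Type*} (Q : Finset ι)
    (C : ι → Fin L → ℝ) (αl αl' αu αu' : ℝ)
    (hl : αl ≤ αl') (hu : αu ≤ αu') (h : αl < αu) (h' : αl' < αu') :
    (Q.filter (fun k => PredNormal (C k) αl αu)).card ≤
      (Q.filter (fun k => PredNormal (C k) αl' αu')).card := by
  have normal_mono : ∀ k ∈ Q, PredNormal (C k) αl αu → PredNormal (C k) αl' αu' :=
    fun _ _ => PredNormal.mono hl hu
  exact Finset.card_le_card (Finset.monotone_filter_right Q normal_mono)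
end
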